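/- Let p ≥ 5 be a prime. Then the Dedekind–Rademacher sum s(p, 3; 5/6, −1/2) equals 1/18 if p ≡ 1 (mod 6), and equals −1/18 if p ≡ 5 (mod 6). -/

import Mathlib

open Real
open scoped Classical

/-- The generalized sawtooth function `((x))`. -/
noncomputable def saw (x : ℝ) : ℝ :=
  if ∃ m : ℤ, x = m then 0 else Int.fract x - 1 / 2

/-- The Dedekind–Rademacher sum
`s(b,a;x,y) = ∑_{k=0}^{|a|−1} ((x + (b/a)(k+y))) (((k+y)/a))`. -/
noncomputable def dedekindRademacher (b a : ℤ) (x y : ℝ) : ℝ :=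
  ∑ k ∈ Finset.range a.natAbs,
    saw (x + (b : ℝ) / (a : ℝ) * ((k : ℝ) + y)) * saw (((k : ℝ) + y) / (a : ℝ))

/-!
Write `f t = ((x + (b/a) t)) ((t/a))`. As `b` is an integer, `f` has period `a`, so that
`s(b, a; x, y) = ∑ f (k + y)` runs over `y + ℤ` modulo `a`. Replacing `t` by `-t` therefore gives
`s(-b, a; x, y) = -s(b, a; x, -y)`, and `-y` may be replaced by `y` when `2y` is an integer. In that
case `s(b, a; x, y)` also has period `2a` in `b`. For `a = 3`, `y = -1/2` this reduces `b ≡ ±1`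
modulo `6` to the single value `s(1, 3; 5/6, -1/2) = 1/18`.
-/

section PeriodicSums

variable {R M : Type*} [CommRing R] [AddCommMonoid M] {f : R → M} {n : ℕ}

theorem sum_range_add_one_of_periodic (hf : Function.Periodic f n) (y : R) :
    ∑ k ∈ Finset.range n, f (k + (y + 1)) = ∑ k ∈ Finset.range n, f (k + y) := by
  cases n with
  | zero => simp
  | succ n =>
    have hlast : f (n + (y + 1)) = f y := by
      rw [← hf y]
      congr 1
      push_cast
      ring
    rw [Finset.sum_range_succ, Finset.sum_range_succ', hlast]
    simp only [Nat.cast_add, Nat.cast_one, Nat.cast_zero, zero_add, add_assoc, add_comm y]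

theorem sum_range_neg_of_periodic (hf : Function.Periodic f n) (y : R) :
    ∑ k ∈ Finset.range n, f (-(k + y)) = ∑ k ∈ Finset.range n, f (k + -y) := by
  rw [← sum_range_add_one_of_periodic hf, ← Finset.sum_range_reflect]
  refine Finset.sum_congr rfl fun k hk => ?_
  have hkn : 1 + k ≤ n := by
    have := Finset.mem_range.mp hk
    omega
  rw [← hf, Nat.sub_sub, Nat.cast_sub hkn]
  congr 1
  push_cast
  ring

end PeriodicSums

theorem saw_eq_ite_fract (x : ℝ) :
    saw x = if Int.fract x = 0 then 0 else Int.fract x - 1 / 2 := by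
  simp only [saw, Int.fract_eq_zero_iff, Set.mem_range, eq_comm]

theorem saw_of_mem_Ioo {x : ℝ} (hx : x ∈ Set.Ioo 0 1) : saw x = x - 1 / 2 := by
  rw [saw_eq_ite_fract, Int.fract_eq_self.mpr ⟨hx.1.le, hx.2⟩, if_neg hx.1.ne']

theorem saw_add_intCast (x : ℝ) (m : ℤ) : saw (x + m) = saw x := by
  simp only [saw_eq_ite_fract, Int.fract_add_intCast]

theorem saw_neg (x : ℝ) : saw (-x) = -saw x := by
  by_cases hx : Int.fract x = 0
  · simp only [saw_eq_ite_fract, Int.fract_neg_eq_zero, hx, if_true, neg_zero]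
  · rw [saw_eq_ite_fract, saw_eq_ite_fract, if_neg (mt Int.fract_neg_eq_zero.mp hx), if_neg hx,
      Int.fract_neg hx]
    ring

theorem periodic_saw_mul_saw (b a : ℤ) (x : ℝ) :
    Function.Periodic (fun t : ℝ => saw (x + b / a * t) * saw (t / a)) a.natAbs := by
  rcases eq_or_ne a 0 with rfl | ha
  · simp [Function.Periodic]
  have ha' : (a : ℝ) ≠ 0 := Int.cast_ne_zero.mpr ha
  have hper : Function.Periodic (fun t : ℝ => saw (x + b / a * t) * saw (t / a)) a := by
    intro t
    have hleft : x + b / a * (t + a) = x + b / a * t + b := by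
      field_simp
      ring
    have hright : (t + a) / a = t / a + (1 : ℤ) := by
      field_simp
      push_cast
      ring
    simp only [hleft, hright, saw_add_intCast]
  rw [Nat.cast_natAbs, Int.cast_abs]
  rcases abs_choice (a : ℝ) with h | h <;> rw [h]
  exacts [hper, hper.neg]

section DedekindRademacher

variable (b a : ℤ) (x y : ℝ)

theorem dedekindRademacher_add_one :
    dedekindRademacher b a x (y + 1) = dedekindRademacher b a x y :=
  sum_range_add_one_of_periodic (periodic_saw_mul_saw b a x) y

theorem dedekindRademacher_neg_left :
    dedekindRademacher (-b) a x y = -dedekindRademacher b a x (-y) := by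
  simp only [dedekindRademacher]
  rw [← sum_range_neg_of_periodic (periodic_saw_mul_saw b a x), ← Finset.sum_neg_distrib]
  refine Finset.sum_congr rfl fun k _ => ?_
  rw [neg_div, saw_neg, Int.cast_neg, neg_div, neg_mul_comm]
  ring

variable {y}

theorem dedekindRademacher_add_mul_of_mul_eq_intCast {m n : ℤ} (hmy : m * y = n) :
    dedekindRademacher (b + m * a) a x y = dedekindRademacher b a x y := by
  rcases eq_or_ne a 0 with rfl | ha
  · simp [dedekindRademacher]
  have ha' : (a : ℝ) ≠ 0 := Int.cast_ne_zero.mpr ha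
  refine Finset.sum_congr rfl fun k _ => ?_
  have hshift : x + ((b + m * a : ℤ) : ℝ) / a * (k + y) =
      x + b / a * (k + y) + (m * k + n : ℤ) := by
    push_cast
    rw [← hmy]
    field_simp
    ring
  rw [hshift, saw_add_intCast]

end DedekindRademacher

theorem dedekindRademacher_one_three_five_sixths_neg_half :
    dedekindRademacher 1 3 (5 / 6) (-1 / 2) = 1 / 18 := by
  have hsaw_one : saw 1 = 0 := by simp [saw_eq_ite_fract]
  have hsaw_half : saw (1 / 2) = 0 := by rw [saw_of_mem_Ioo] <;> norm_num
  have hsaw_two_thirds : saw (2 / 3) = 1 / 6 := by rw [saw_of_mem_Ioo] <;> norm_num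
  have hsaw_neg_sixth : saw (-(1 / 6)) = 1 / 3 := by
    rw [saw_neg, saw_of_mem_Ioo] <;> norm_num
  calc dedekindRademacher 1 3 (5 / 6) (-1 / 2)
      = saw (2 / 3) * saw (-(1 / 6)) + saw 1 * saw (1 / 6) + saw (4 / 3) * saw (1 / 2) := by
        norm_num [dedekindRademacher, Finset.sum_range_succ]
    _ = 1 / 18 := by
        rw [hsaw_one, hsaw_half, hsaw_two_thirds, hsaw_neg_sixth]
        norm_num

theorem dedekindRademacher_neg_one_three_five_sixths_neg_half :
    dedekindRademacher (-1) 3 (5 / 6) (-1 / 2) = -1 / 18 := by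
  have hhalf : -(-1 / 2 : ℝ) = -1 / 2 + 1 := by norm_num
  rw [dedekindRademacher_neg_left, hhalf, dedekindRademacher_add_one,
    dedekindRademacher_one_three_five_sixths_neg_half, neg_div]

theorem stmt_12_general (b : ℤ) :
    (b % 6 = 1 → dedekindRademacher b 3 (5 / 6) (-1 / 2) = 1 / 18) ∧
    (b % 6 = 5 → dedekindRademacher b 3 (5 / 6) (-1 / 2) = -1 / 18) := by
  have add_period (c q : ℤ) : dedekindRademacher (c + 2 * q * 3) 3 (5 / 6) (-1 / 2) =
      dedekindRademacher c 3 (5 / 6) (-1 / 2) :=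
    dedekindRademacher_add_mul_of_mul_eq_intCast c 3 (5 / 6) (n := -q) (by push_cast; ring)
  constructor
  · intro hb
    obtain ⟨q, rfl⟩ : ∃ q, b = 1 + 2 * q * 3 := ⟨b / 6, by omega⟩
    rw [add_period, dedekindRademacher_one_three_five_sixths_neg_half]
  · intro hb
    obtain ⟨q, rfl⟩ : ∃ q, b = -1 + 2 * q * 3 := ⟨b / 6 + 1, by omega⟩
    rw [add_period, dedekindRademacher_neg_one_three_five_sixths_neg_half]

/-- For a prime `p ≥ 5`: `s(p, 3; 5/6, −1/2) = 1/18` if `p ≡ 1 (mod 6)`, and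
`s(p, 3; 5/6, −1/2) = −1/18` if `p ≡ 5 (mod 6)`. -/
theorem stmt_12 (p : ℕ) (hp : p.Prime) (hp5 : 5 ≤ p) :
    (p % 6 = 1 → dedekindRademacher (p : ℤ) 3 (5 / 6) (-1 / 2) = 1 / 18) ∧
    (p % 6 = 5 → dedekindRademacher (p : ℤ) 3 (5 / 6) (-1 / 2) = -1 / 18) :=
  ⟨fun h => (stmt_12_general p).1 (by omega), fun h => (stmt_12_general p).2 (by omega)⟩
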